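/- arXiv:2412.14616 — 4 statements merged into one kernel-verified Lean document; each statement's English description precedes it below -/
import Mathlib

section
/- Let s be a channel occupancy pattern obeying the SPS reselection rule. If node v keeps its slot from frame y to frame y+1, i.e. s_v(y) = s_v(y+1), then the frame state does not increase: Λ(y+1) ≤ Λ(y). Consequently, if s_v is constant on the frames of one reservation, Λ is nonincreasing throughout that reservation. -/
open Finset

/-- The frame state: number of nodes transmitting in the same slot as node `v` in frame `x`. -/
def frameState (V : ℕ) (s : ℕ → Fin V → ℕ) (v : Fin V) (x : ℕ) : ℕ :=
  (Finset.univ.filter fun i : Fin V => s x i = s x v).card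

/-- The reservation duration `B(x)`: frames since node `v` changed its slot. -/
noncomputable def resDur (V : ℕ) (s : ℕ → Fin V → ℕ) (v : Fin V) (x : ℕ) : ℕ :=
  sInf {b : ℕ | 1 ≤ b ∧ b ≤ x ∧ s (x - b) v ≠ s (x - b + 1) v}

/-- `ξ_n(x)`: end of the `n`-th reservation prior to frame `x`. -/
noncomputable def xiRes (V : ℕ) (s : ℕ → Fin V → ℕ) (v : Fin V) : ℕ → ℕ → ℕ
  | 0, x => x
  | n + 1, x => xiRes V s v n x - resDur V s v (xiRes V s v n x)

/-- The collision duration `C(x)`: frames since the last singleton transmission. -/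
noncomputable def collDur (V : ℕ) (s : ℕ → Fin V → ℕ) (v : Fin V) (x : ℕ) : ℕ :=
  sInf {c : ℕ | c ≤ x ∧ frameState V s v (x - c) = 1}

/-- The collided reservation count `W(x)`. -/
noncomputable def collResCnt (V : ℕ) (s : ℕ → Fin V → ℕ) (v : Fin V) (x : ℕ) : ℕ :=
  sInf {n : ℕ | n ≤ x ∧ frameState V s v (xiRes V s v n x) = 1}

/-- Set of empty slots in frame `x`. -/
def emptySlots (m V : ℕ) (s : ℕ → Fin V → ℕ) (x : ℕ) : Finset ℕ :=
  Finset.range m \ Finset.univ.image (s x)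

/-- The SPS reselection rule: a node changing its slot must move to a slot
that was empty in the previous frame. -/
def SPSRule (m V : ℕ) (s : ℕ → Fin V → ℕ) : Prop :=
  ∀ (u : Fin V) (x : ℕ), s (x + 1) u ≠ s x u → s (x + 1) u ∈ emptySlots m V s x

/-- The convention `s(0) = (0,…,0)`, `s(1) = (1,…,V)`. -/
def PatternConvention (V : ℕ) (s : ℕ → Fin V → ℕ) : Prop :=
  (∀ u : Fin V, s 0 u = 0) ∧ (∀ u : Fin V, s 1 u = (u : ℕ) + 1)

/-- All transmissions use slots in `{0,…,m−1}`. -/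
def PatternBounded (m V : ℕ) (s : ℕ → Fin V → ℕ) : Prop :=
  ∀ (x : ℕ) (u : Fin V), s x u < m

/-- The Age of Information at time `t`, with frame index `t / m` and position `t % m`. -/
noncomputable def AoI (m V : ℕ) (s : ℕ → Fin V → ℕ) (v : Fin V) (t : ℕ) : ℕ :=
  if t % m < s (t / m) v then m * collDur V s v (t / m - 1) + m + t % m
  else m * collDur V s v (t / m) + t % m

/-- Under the SPS reselection rule, if node `v` keeps its slot from frame `y` to
frame `y+1` then the frame state does not increase: `Λ(y+1) ≤ Λ(y)`.
Consequently, if `s_v` is constant on the frames of one reservation, `Λ` is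
nonincreasing throughout that reservation. -/
theorem frameState_nonincreasing (V m : ℕ) (hV : 1 ≤ V) (hm : V < m)
    (s : ℕ → Fin V → ℕ) (hbd : PatternBounded m V s) (hsps : SPSRule m V s)
    (v : Fin V) :
    (∀ y : ℕ, s y v = s (y + 1) v → frameState V s v (y + 1) ≤ frameState V s v y) ∧
    (∀ a b : ℕ, (∀ y : ℕ, a ≤ y → y < b → s y v = s (y + 1) v) →
      ∀ y z : ℕ, a ≤ y → y ≤ z → z ≤ b → frameState V s v z ≤ frameState V s v y) := by
  have step : ∀ y : ℕ, s y v = s (y + 1) v →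
      frameState V s v (y + 1) ≤ frameState V s v y := by
    intro y hy
    unfold frameState
    apply Finset.card_le_card
    intro i hi
    simp only [Finset.mem_filter, Finset.mem_univ, true_and] at hi ⊢
    by_contra hne
    have h1 : s (y + 1) i ≠ s y i := fun h => hne (by rw [← h, hi, hy])
    have h2 := hsps i y h1
    unfold emptySlots at h2
    rw [Finset.mem_sdiff] at h2
    exact h2.2 (Finset.mem_image.mpr ⟨v, Finset.mem_univ v, by rw [hi, hy]⟩)
  refine ⟨step, ?_⟩
  intro a b hab y z hay hyz
  induction z, hyz using Nat.le_induction with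
  | base => intro _; exact le_rfl
  | succ z hyz ih =>
    intro hzb
    exact (step z (hab z (by omega) (by omega))).trans (ih (by omega))
end

section
/- Let s be a channel occupancy pattern obeying the SPS reselection rule and let x ∈ ℕ with x ≥ 1. Then Λ(ξ_{W(x)}(x)) = 1, and for every i ∈ {1,…, x − ξ_{W(x)}(x)} the intermediate frame states satisfy Λ(ξ_{W(x)}(x) + i) ≥ 2; hence C(x) = x − ξ_{W(x)}(x). -/
open Finset

theorem frameState_eq_one_iff (V : ℕ) (s : ℕ → Fin V → ℕ) (v : Fin V) (x : ℕ) :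
    frameState V s v x = 1 ↔ ∀ i, s x i = s x v → i = v := by
  unfold frameState
  rw [Finset.card_eq_one]
  constructor
  · rintro ⟨a, ha⟩ i hi
    have h1 : i ∈ ({a} : Finset (Fin V)) := by rw [← ha]; simp [hi]
    have h2 : v ∈ ({a} : Finset (Fin V)) := by rw [← ha]; simp
    simp only [Finset.mem_singleton] at h1 h2
    rw [h1, h2]
  · intro h
    refine ⟨v, ?_⟩
    ext i
    simp only [Finset.mem_filter, Finset.mem_univ, true_and, Finset.mem_singleton]
    exact ⟨h i, fun e => by rw [e]⟩

theorem frameState_pos (V : ℕ) (s : ℕ → Fin V → ℕ) (v : Fin V) (x : ℕ) :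
    1 ≤ frameState V s v x :=
  Finset.card_pos.mpr ⟨v, by simp⟩

theorem frameState_persist (V m : ℕ) (s : ℕ → Fin V → ℕ) (hsps : SPSRule m V s)
    (v : Fin V) (z : ℕ) (h : frameState V s v z = 1) (hz : s (z + 1) v = s z v) :
    frameState V s v (z + 1) = 1 := by
  rw [frameState_eq_one_iff] at h ⊢
  intro i hi
  by_cases hc : s (z + 1) i = s z i
  · exact h i (by rw [← hc, hi, hz])
  · have := hsps i z hc
    simp only [emptySlots, Finset.mem_sdiff, Finset.mem_image, Finset.mem_univ, true_and,
      not_exists] at this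
    exact absurd (by rw [hi, hz]) (this.2 v)

theorem resDur_step (V m : ℕ) (s : ℕ → Fin V → ℕ)
    (hconv : PatternConvention V s) (hsps : SPSRule m V s)
    (v : Fin V) (y : ℕ) (hy : 1 ≤ y) (hne : frameState V s v y ≠ 1) :
    1 ≤ resDur V s v y ∧ resDur V s v y < y ∧
      ∀ z, y - resDur V s v y < z → z ≤ y → frameState V s v z ≠ 1 := by
  have hmem : resDur V s v y ∈ {b : ℕ | 1 ≤ b ∧ b ≤ y ∧ s (y - b) v ≠ s (y - b + 1) v} := by
    apply Nat.sInf_mem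
    refine ⟨y, hy, le_rfl, ?_⟩
    simp [hconv.1 v, hconv.2 v]
  have hmin : ∀ b, 1 ≤ b → b < resDur V s v y → s (y - b) v = s (y - b + 1) v := by
    intro b h1 h2
    by_contra h3
    exact Nat.notMem_of_lt_sInf h2 ⟨h1, h2.le.trans hmem.2.1, h3⟩
  have key : ∀ k, k < resDur V s v y → frameState V s v (y - k) ≠ 1 := by
    intro k
    induction k with
    | zero => intro _; exact hne
    | succ k ih =>
      intro hk h1
      apply ih (by omega)
      have hb := hmem.2.1
      have := frameState_persist V m s hsps v _ h1 (hmin (k + 1) (by omega) hk).symm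
      rwa [show y - (k + 1) + 1 = y - k by omega] at this
  refine ⟨hmem.1, ?_, ?_⟩
  · rcases hmem.2.1.lt_or_eq with h | h
    · exact h
    · exfalso
      apply key (y - 1) (by omega)
      rw [show y - (y - 1) = 1 by omega, frameState_eq_one_iff]
      intro i hi
      rw [hconv.2, hconv.2] at hi
      exact Fin.ext (by omega)
  · intro z h1 h2
    have := key (y - z) (by omega)
    rwa [show y - (y - z) = z by omega] at this

theorem xiRes_inv (V m : ℕ) (s : ℕ → Fin V → ℕ)
    (hconv : PatternConvention V s) (hsps : SPSRule m V s)
    (v : Fin V) (x : ℕ) (hx : 1 ≤ x) (n : ℕ)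
    (h : ∀ k < n, frameState V s v (xiRes V s v k x) ≠ 1) :
    1 ≤ xiRes V s v n x ∧ n + xiRes V s v n x ≤ x ∧
      ∀ z, xiRes V s v n x < z → z ≤ x → frameState V s v z ≠ 1 := by
  induction n with
  | zero =>
    simp only [xiRes]
    exact ⟨hx, by omega, fun z _ _ => by omega⟩
  | succ n ih =>
    obtain ⟨h1, h2, h3⟩ := ih fun k hk => h k (by omega)
    obtain ⟨g1, g2, g3⟩ := resDur_step V m s hconv hsps v _ h1 (h n (by omega))
    simp only [xiRes]
    refine ⟨by omega, by omega, fun z hz hzx => ?_⟩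
    by_cases hc : z ≤ xiRes V s v n x
    · exact g3 z hz hc
    · exact h3 z (by omega) hzx

/-- Under the SPS reselection rule, for every frame `x ≥ 1`:
`Λ(ξ_{W(x)}(x)) = 1`, every intermediate frame state
`Λ(ξ_{W(x)}(x) + i)` for `i ∈ {1,…,x − ξ_{W(x)}(x)}` is at least `2`, and hence
`C(x) = x − ξ_{W(x)}(x)`. -/
theorem collDur_eq_dist_to_lastSingleton (V m : ℕ) (hV : 1 ≤ V) (hm : V < m)
    (s : ℕ → Fin V → ℕ) (hbd : PatternBounded m V s)
    (hconv : PatternConvention V s) (hsps : SPSRule m V s)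
    (v : Fin V) (x : ℕ) (hx : 1 ≤ x) :
    frameState V s v (xiRes V s v (collResCnt V s v x) x) = 1 ∧
    (∀ i : ℕ, 1 ≤ i → i ≤ x - xiRes V s v (collResCnt V s v x) x →
      2 ≤ frameState V s v (xiRes V s v (collResCnt V s v x) x + i)) ∧
    collDur V s v x = x - xiRes V s v (collResCnt V s v x) x := by
  have hne : {n : ℕ | n ≤ x ∧ frameState V s v (xiRes V s v n x) = 1}.Nonempty := by
    by_contra hcon
    rw [Set.not_nonempty_iff_eq_empty] at hcon
    have := xiRes_inv V m s hconv hsps v x hx x fun k hk h1 => by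
      have hk' : k ∈ {n : ℕ | n ≤ x ∧ frameState V s v (xiRes V s v n x) = 1} := ⟨hk.le, h1⟩
      rw [hcon] at hk'
      exact hk'
    omega
  have hW : collResCnt V s v x ∈ {n : ℕ | n ≤ x ∧ frameState V s v (xiRes V s v n x) = 1} :=
    Nat.sInf_mem hne
  obtain ⟨i1, i2, i3⟩ := xiRes_inv V m s hconv hsps v x hx (collResCnt V s v x)
    fun k hk h1 => Nat.notMem_of_lt_sInf hk ⟨hk.le.trans hW.1, h1⟩
  have hW2 := hW.2
  generalize xiRes V s v (collResCnt V s v x) x = w at *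
  refine ⟨hW2, ?_, ?_⟩
  · intro i hi hix
    have := i3 (w + i) (by omega) (by omega)
    have := frameState_pos V s v (w + i)
    omega
  · have hm1 : x - w ∈ {c : ℕ | c ≤ x ∧ frameState V s v (x - c) = 1} :=
      ⟨by omega, by rwa [show x - (x - w) = w by omega]⟩
    apply le_antisymm
    · exact Nat.sInf_le hm1
    · have hc : collDur V s v x ∈ {c : ℕ | c ≤ x ∧ frameState V s v (x - c) = 1} :=
        Nat.sInf_mem ⟨_, hm1⟩
      by_contra hlt
      exact i3 (x - collDur V s v x) (by omega) (by omega) hc.2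
end

section
/- The SPS occupancy chain is irreducible in two steps: for all states c, d ∈ S and any τ ∈ E(c), the constant state e := (τ,…,τ) satisfies P(e | c) > 0 and P(d | e) > 0; in particular the two-step transition probability Σ_{e ∈ S} P(e | c)·P(d | e) is strictly positive for all c, d ∈ S. -/
open Finset

/-- The set of empty slots of a state `c ∈ {0,…,m−1}^V`. -/
def emptyS (V m : ℕ) (c : Fin V → Fin m) : Finset (Fin m) :=
  Finset.univ \ Finset.univ.image c

/-- One-step transition probability of the SPS occupancy chain:
`P(d | c) = ∏_u [(1−p_E)·1{d_u = c_u} + (p_E / N(c))·1{d_u ∈ E(c)}]`. -/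
noncomputable def spsP (V m : ℕ) (pE : ℝ) (c d : Fin V → Fin m) : ℝ :=
  ∏ u : Fin V,
    ((1 - pE) * (if d u = c u then 1 else 0) +
      (pE / ((emptyS V m c).card : ℝ)) * (if d u ∈ emptyS V m c then 1 else 0))

theorem spsP_nonneg_aux (V m : ℕ) (pE : ℝ) (hpE0 : 0 < pE) (hpE1 : pE < 1)
    (c d : Fin V → Fin m) : 0 ≤ spsP V m pE c d := by
  unfold spsP
  have h1 : 0 < 1 - pE := by linarith
  refine Finset.prod_nonneg fun u _ => ?_
  split_ifs <;> positivity

theorem spsP_pos_aux (V m : ℕ) (pE : ℝ) (hpE0 : 0 < pE) (hpE1 : pE < 1)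
    (c d : Fin V → Fin m) (h : ∀ u, d u = c u ∨ d u ∈ emptyS V m c) :
    0 < spsP V m pE c d := by
  unfold spsP
  have h1 : 0 < 1 - pE := by linarith
  refine Finset.prod_pos fun u _ => ?_
  rcases h u with hu | hu
  · rw [if_pos hu]
    have : 0 ≤ (pE / ((emptyS V m c).card : ℝ)) *
        (if d u ∈ emptyS V m c then (1 : ℝ) else 0) := by
      split_ifs <;> positivity
    linarith
  · rw [if_pos hu]
    have hc : 0 < ((emptyS V m c).card : ℝ) := by
      exact_mod_cast Finset.card_pos.mpr ⟨_, hu⟩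
    have : 0 < pE / ((emptyS V m c).card : ℝ) := div_pos hpE0 hc
    have : 0 ≤ (1 - pE) * (if d u = c u then (1 : ℝ) else 0) := by
      split_ifs <;> positivity
    linarith

/-- **Irreducibility in two steps:** for all states `c, d` and any `τ ∈ E(c)`, the
constant state `e = (τ,…,τ)` satisfies `P(e|c) > 0` and `P(d|e) > 0`; in particular
the two-step transition probability from `c` to `d` is strictly positive. -/
theorem spsP_two_step_pos (V m : ℕ) (hV : 1 ≤ V) (hm : V < m)
    (pE : ℝ) (hpE0 : 0 < pE) (hpE1 : pE < 1)
    (c d : Fin V → Fin m) (τ : Fin m) (hτ : τ ∈ emptyS V m c) :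
    0 < spsP V m pE c (fun _ => τ) ∧
    0 < spsP V m pE (fun _ => τ) d ∧
    0 < ∑ e : Fin V → Fin m, spsP V m pE c e * spsP V m pE e d := by
  have hA : 0 < spsP V m pE c (fun _ => τ) :=
    spsP_pos_aux V m pE hpE0 hpE1 _ _ fun _ => Or.inr hτ
  have hB : 0 < spsP V m pE (fun _ => τ) d := by
    refine spsP_pos_aux V m pE hpE0 hpE1 _ _ fun u => ?_
    by_cases h : d u = τ
    · exact Or.inl h
    · refine Or.inr ?_
      simp only [emptyS, Finset.mem_sdiff, Finset.mem_univ, true_and, Finset.mem_image,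
        not_exists]
      exact fun _ hx => h hx.symm
  refine ⟨hA, hB, ?_⟩
  refine Finset.sum_pos' (fun e _ => mul_nonneg ?_ ?_)
    ⟨fun _ => τ, Finset.mem_univ _, mul_pos hA hB⟩
  · exact spsP_nonneg_aux V m pE hpE0 hpE1 _ _
  · exact spsP_nonneg_aux V m pE hpE0 hpE1 _ _
end

section
/- Every stationary probability mass function π of the SPS occupancy chain is invariant under relabeling of slots: for every permutation σ of {0,…,m−1} and every state c ∈ S, π(σ∘c) = π(c), where (σ∘c)_u := σ(c_u) for each node u. (This uses that the stationary pmf of the chain is unique.) -/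
open Finset

lemma mem_emptyS' (V m : ℕ) (c : Fin V → Fin m) (x : Fin m) :
    x ∈ emptyS V m c ↔ ∀ u, c u ≠ x := by
  simp [emptyS]

lemma emptyS_nonempty' (V m : ℕ) (hm : V < m) (c : Fin V → Fin m) :
    (emptyS V m c).Nonempty := by
  by_contra h
  have h2 : Function.Surjective c := by
    intro x
    by_contra hx
    push Not at hx
    exact h ⟨x, (mem_emptyS' V m c x).2 hx⟩
  have := Fintype.card_le_of_surjective c h2
  simp at this
  omega

lemma spsP_nonneg' (V m : ℕ) (pE : ℝ) (h0 : 0 < pE) (h1 : pE < 1) (c d : Fin V → Fin m) :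
    0 ≤ spsP V m pE c d := by
  unfold spsP
  refine Finset.prod_nonneg fun u _ => ?_
  have : 0 ≤ 1 - pE := by linarith
  positivity

lemma spsP_pos' (V m : ℕ) (pE : ℝ) (h0 : 0 < pE) (h1 : pE < 1) (hm : V < m)
    (c d : Fin V → Fin m) (h : ∀ u, d u ∈ emptyS V m c) :
    0 < spsP V m pE c d := by
  unfold spsP
  refine Finset.prod_pos fun u _ => ?_
  have h2 : 0 ≤ 1 - pE := by linarith
  have h3 : (0 : ℝ) < (emptyS V m c).card := by
    exact_mod_cast Finset.card_pos.2 (emptyS_nonempty' V m hm c)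
  rw [if_pos (h u)]
  positivity

lemma spsP_sum' (V m : ℕ) (pE : ℝ) (hm : V < m) (c : Fin V → Fin m) :
    ∑ d, spsP V m pE c d = 1 := by
  unfold spsP
  have h3 : ((emptyS V m c).card : ℝ) ≠ 0 := by
    exact_mod_cast (Finset.card_pos.2 (emptyS_nonempty' V m hm c)).ne'
  have := Finset.prod_univ_sum (fun _ : Fin V => (Finset.univ : Finset (Fin m)))
    (fun u x => ((1 - pE) * (if x = c u then 1 else 0) +
      (pE / ((emptyS V m c).card : ℝ)) * (if x ∈ emptyS V m c then 1 else 0)))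
  rw [Fintype.piFinset_univ] at this
  rw [← this]
  refine Finset.prod_eq_one fun u _ => ?_
  rw [Finset.sum_add_distrib, ← Finset.mul_sum, ← Finset.mul_sum]
  simp
  field_simp
  ring

lemma spsP_perm' (V m : ℕ) (pE : ℝ) (σ : Equiv.Perm (Fin m)) (c d : Fin V → Fin m) :
    spsP V m pE (fun u => σ (c u)) (fun u => σ (d u)) = spsP V m pE c d := by
  have hE : emptyS V m (fun u => σ (c u)) = (emptyS V m c).map σ.toEmbedding := by
    ext x
    rw [mem_emptyS', Finset.mem_map_equiv, mem_emptyS']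
    simp [Equiv.eq_symm_apply]
  unfold spsP
  rw [hE]
  simp

/-- A nonnegative invariant vector that is positive somewhere is positive everywhere. -/
lemma inv_pos' (V m : ℕ) (pE : ℝ) (h0 : 0 < pE) (h1 : pE < 1) (hm : V < m) (hV : 1 ≤ V)
    (g : (Fin V → Fin m) → ℝ) (hg : ∀ c, 0 ≤ g c)
    (hinv : ∀ d, g d = ∑ c, g c * spsP V m pE c d)
    (c : Fin V → Fin m) (hc : 0 < g c) (d : Fin V → Fin m) : 0 < g d := by
  have step : ∀ c d : Fin V → Fin m, 0 < g c → (∀ u, d u ∈ emptyS V m c) → 0 < g d := by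
    intro c d hc h
    rw [hinv d]
    exact Finset.sum_pos' (fun x _ => mul_nonneg (hg x) (spsP_nonneg' V m pE h0 h1 x d))
      ⟨c, Finset.mem_univ _, mul_pos hc (spsP_pos' V m pE h0 h1 hm c d h)⟩
  obtain ⟨s, hs⟩ := emptyS_nonempty' V m hm c
  obtain ⟨t, ht⟩ := emptyS_nonempty' V m hm d
  have hcs : 0 < g (fun _ => s) := step c _ hc fun _ => hs
  have hct : 0 < g (fun _ => t) := by
    by_cases hst : s = t
    · rwa [← hst]
    · exact step _ _ hcs fun _ => (mem_emptyS' V m _ t).2 fun _ => hst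
  refine step _ _ hct fun u => (mem_emptyS' V m _ _).2 fun _ h => ?_
  exact (mem_emptyS' V m d t).1 ht u h.symm

/-- A signed invariant vector of total mass zero vanishes. -/
lemma inv_zero' (V m : ℕ) (pE : ℝ) (h0 : 0 < pE) (h1 : pE < 1) (hm : V < m) (hV : 1 ≤ V)
    (f : (Fin V → Fin m) → ℝ) (hsum : ∑ c, f c = 0)
    (hinv : ∀ d, f d = ∑ c, f c * spsP V m pE c d) (c : Fin V → Fin m) : f c = 0 := by
  have hle : ∀ d ∈ (Finset.univ : Finset (Fin V → Fin m)),
      |f d| ≤ ∑ c, |f c| * spsP V m pE c d := by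
    intro d _
    conv_lhs => rw [hinv d]
    refine (Finset.abs_sum_le_sum_abs _ _).trans (le_of_eq ?_)
    refine Finset.sum_congr rfl fun x _ => ?_
    rw [abs_mul, abs_of_nonneg (spsP_nonneg' V m pE h0 h1 x d)]
  have htot : ∑ d, |f d| = ∑ d, ∑ c, |f c| * spsP V m pE c d := by
    rw [Finset.sum_comm]
    refine Finset.sum_congr rfl fun x _ => ?_
    rw [← Finset.mul_sum, spsP_sum' V m pE hm, mul_one]
  have habs : ∀ d, |f d| = ∑ c, |f c| * spsP V m pE c d := fun d =>
    (Finset.sum_eq_sum_iff_of_le hle).1 htot d (Finset.mem_univ _)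
  have hp := inv_pos' V m pE h0 h1 hm hV (fun d => |f d| + f d)
    (fun d => by have := neg_abs_le (f d); linarith)
    (fun d => by
      simp only [add_mul, Finset.sum_add_distrib]
      rw [← habs d, ← hinv d])
  have hn := inv_pos' V m pE h0 h1 hm hV (fun d => |f d| - f d)
    (fun d => by have := le_abs_self (f d); linarith)
    (fun d => by
      simp only [sub_mul, Finset.sum_sub_distrib]
      rw [← habs d, ← hinv d])
  by_contra hne
  rcases lt_or_gt_of_ne hne with hlt | hgt
  · have hall : ∀ d, f d < 0 := by
      intro d
      have h := hn c (by have := abs_nonneg (f c); linarith) d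
      by_contra hd
      rw [abs_of_nonneg (not_lt.1 hd)] at h
      linarith
    have := Finset.sum_neg (fun d _ => hall d) ⟨c, Finset.mem_univ c⟩
    linarith
  · have hall : ∀ d, 0 < f d := by
      intro d
      have h := hp c (by have := abs_nonneg (f c); linarith) d
      by_contra hd
      rw [abs_of_nonpos (not_lt.1 hd)] at h
      linarith
    have := Finset.sum_pos (fun d _ => hall d) ⟨c, Finset.mem_univ c⟩
    linarith

/-- **Invariance of the stationary pmf under relabeling of slots:** every stationary
probability mass function `π` of the SPS occupancy chain satisfies `π(σ∘c) = π(c)`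
for every permutation `σ` of the slots and every state `c`. -/
theorem stationary_perm_invariant (V m : ℕ) (hV : 1 ≤ V) (hm : V < m)
    (pE : ℝ) (hpE0 : 0 < pE) (hpE1 : pE < 1)
    (π : (Fin V → Fin m) → ℝ) (hnn : ∀ c, 0 ≤ π c)
    (hsum : ∑ c : Fin V → Fin m, π c = 1)
    (hstat : ∀ d, π d = ∑ c : Fin V → Fin m, π c * spsP V m pE c d)
    (σ : Equiv.Perm (Fin m)) (c : Fin V → Fin m) :
    π (fun u => σ (c u)) = π c := by
  let e : (Fin V → Fin m) ≃ (Fin V → Fin m) := Equiv.arrowCongr (Equiv.refl _) σ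
  have he : ∀ x, e x = fun u => σ (x u) := fun x => rfl
  have key := inv_zero' V m pE hpE0 hpE1 hm hV (fun x => π (e x) - π x)
    (by rw [Finset.sum_sub_distrib, Equiv.sum_comp e π, sub_self])
    (fun d => by
      simp only [sub_mul, Finset.sum_sub_distrib]
      rw [← hstat d, hstat (e d), ← Equiv.sum_comp e]
      congr 1
      refine Finset.sum_congr rfl fun x _ => ?_
      rw [he x, he d, spsP_perm']) c
  simp only [he] at key
  linarith
end
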